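/- Let m, n ≥ 1, let b : Fin m → ZMod 2 and k : Fin m → ℕ with k i ≤ n for all i, and let Z̄ be the logical-Z representative of the n×m concatenated bit- and phase-flip repetition code. The weight enumerator of the stabilizer coset (M(b,k) + Z̄) + S equals F^o_m(u, w) for all real x, y, where u i = h^{b i}_{k i, n}(x,y) and w i = h^{b i}_{n − k i, n}(x,y). -/

import Mathlib

/-!
Both parity constraints in the coset are resolved by the nontrivial character `sgn` of `ZMod 2`:
for any index type, summing a product weight `∏ j, f j (a j)` over the strings `a` with
`∑ j, a j = c` gives `(∏ (f j 0 + f j 1) + sgn c * ∏ (f j 0 - f j 1)) / 2` (`sum_parity`).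

An element of the coset `(M(b,k) + Z̄) + S` is the same as a pair `(a, ζ)`: the X-parts `a i` of
the blocks, with parity `b i`, and block Z-shifts `ζ i` of total parity `1`, the Z-part of block
`i` being the indicator of `j < k i` shifted by `ζ i` (`mem_coset`). As the monomial of a string
is a product over qubits (`monomial_eq_prod`), for fixed `ζ` the sum over `a` factors over blocks.
By `sum_parity`, the factor of block `i` is `h^{b i}_{k i, n}` or `h^{b i}_{n - k i, n}` according
to `ζ i` (`block_enum`): a position with Z-part `1` contributes `y + y` to the first product and
`0` to the second, so the second product survives only if no Z is present.
Applying `sum_parity` once more, to the sum over `ζ`, gives `F^o_m`.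
-/

/-- The weight of a Pauli string on qubits indexed by `Fin m × Fin n`. -/
def wt2 {m n : ℕ} (v : Fin m × Fin n → ZMod 2 × ZMod 2) : ℕ :=
  (Finset.univ.filter fun p => v p ≠ (0, 0)).card

/-- The weight enumerator of a finite set of Pauli strings on `Fin m × Fin n`. -/
noncomputable def enum2 {m n : ℕ} (T : Finset (Fin m × Fin n → ZMod 2 × ZMod 2))
    (x y : ℝ) : ℝ :=
  ∑ v ∈ T, x ^ (m * n - wt2 v) * y ^ wt2 v

/-- The stabilizer group of the `n × m` concatenated bit- and phase-flip repetition code: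
even X-weight in each block, Z-part constant within each block, and the block Z-values
sum to zero. -/
def concatStab (m n : ℕ) : Finset (Fin m × Fin n → ZMod 2 × ZMod 2) :=
  Finset.univ.filter fun v =>
    (∀ i, ∑ j, (v (i, j)).1 = 0) ∧
    ∃ ζ : Fin m → ZMod 2, (∀ i j, (v (i, j)).2 = ζ i) ∧ ∑ i, ζ i = 0

/-- `M(b,k)`: block `i` has X-part `b i` at position 0 (and 0 elsewhere) and Z-part 1 at
positions `j < k i` (and 0 elsewhere). -/
def Mbk (m n : ℕ) (b : Fin m → ZMod 2) (k : Fin m → ℕ) :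
    Fin m × Fin n → ZMod 2 × ZMod 2 :=
  fun p => (if (p.2 : ℕ) = 0 then b p.1 else 0, if (p.2 : ℕ) < k p.1 then 1 else 0)

/-- The logical-Z representative: Z-part 1 at every position of block 0. -/
def ZbarC (m n : ℕ) : Fin m × Fin n → ZMod 2 × ZMod 2 :=
  fun p => (0, if (p.1 : ℕ) = 0 then 1 else 0)

/-- The logical-X representative: X-part 1 at position 0 of every block. -/
def XbarC (m n : ℕ) : Fin m × Fin n → ZMod 2 × ZMod 2 :=
  fun p => (if (p.2 : ℕ) = 0 then 1 else 0, 0)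

/-- The logical-Y representative. -/
def YbarC (m n : ℕ) : Fin m × Fin n → ZMod 2 × ZMod 2 :=
  XbarC m n + ZbarC m n

noncomputable def fe (n : ℕ) (x y : ℝ) : ℝ := ((x + y) ^ n + (x - y) ^ n) / 2

noncomputable def fo (n : ℕ) (x y : ℝ) : ℝ := ((x + y) ^ n - (x - y) ^ n) / 2

noncomputable def g (k n : ℕ) (x y : ℝ) : ℝ := (1 / 2) * (x + y) ^ (n - k) * (2 * y) ^ k

/-- `h^b_{k,n}`. -/
noncomputable def hpol (b : ZMod 2) (k n : ℕ) (x y : ℝ) : ℝ :=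
  if k = 0 then (if b = 0 then fe n x y else fo n x y) else g k n x y

noncomputable def Fe (m : ℕ) (u w : Fin m → ℝ) : ℝ :=
  ((∏ i, (u i + w i)) + ∏ i, (u i - w i)) / 2

noncomputable def Fo (m : ℕ) (u w : Fin m → ℝ) : ℝ :=
  ((∏ i, (u i + w i)) - ∏ i, (u i - w i)) / 2

/-- The nontrivial character of `ZMod 2`, with values `±1` in `ℝ`. -/
noncomputable def sgn (c : ZMod 2) : ℝ := if c = 0 then 1 else -1

/-- The single-qubit weight: `x` for the identity and `y` for any other Pauli `(a, z)`. -/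
noncomputable def qw (x y : ℝ) (a z : ZMod 2) : ℝ := if (a, z) = (0, 0) then x else y

lemma zmod_two_cases : ∀ c : ZMod 2, c = 0 ∨ c = 1 := by decide

lemma sgn_add (c d : ZMod 2) : sgn (c + d) = sgn c * sgn d := by
  have h : (1 : ZMod 2) + 1 = 0 := by decide
  rcases zmod_two_cases c with rfl | rfl <;> rcases zmod_two_cases d with rfl | rfl <;>
    simp [sgn, h]

lemma sgn_sum {ι : Type*} [Fintype ι] (a : ι → ZMod 2) : sgn (∑ j, a j) = ∏ j, sgn (a j) := by
  classical
  induction (Finset.univ : Finset ι) using Finset.induction_on with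
  | empty => simp [sgn]
  | insert i s hi ih => rw [Finset.sum_insert hi, Finset.prod_insert hi, sgn_add, ih]

lemma indicator_parity (c d : ZMod 2) :
    (if c = d then (1 : ℝ) else 0) = (1 + sgn d * sgn c) / 2 := by
  rcases zmod_two_cases c with rfl | rfl <;> rcases zmod_two_cases d with rfl | rfl <;>
    norm_num [sgn]

lemma sum_zmod_two (f : ZMod 2 → ℝ) : ∑ a, f a = f 0 + f 1 := Fin.sum_univ_two f

/-- The sum of a product weight over the binary strings of prescribed parity `c`. -/
lemma sum_parity {ι : Type*} [Fintype ι] [DecidableEq ι] (f : ι → ZMod 2 → ℝ) (c : ZMod 2) :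
    ∑ a : ι → ZMod 2 with ∑ j, a j = c, ∏ j, f j (a j)
      = (∏ j, (f j 0 + f j 1) + sgn c * ∏ j, (f j 0 - f j 1)) / 2 := by
  have h1 : ∏ j, (f j 0 + f j 1) = ∑ a : ι → ZMod 2, ∏ j, f j (a j) := by
    simp_rw [← sum_zmod_two]
    rw [Finset.prod_univ_sum, Fintype.piFinset_univ]
  have h2 : ∏ j, (f j 0 - f j 1) = ∑ a : ι → ZMod 2, ∏ j, (sgn (a j) * f j (a j)) := by
    have h (j : ι) : f j 0 - f j 1 = ∑ a, sgn a * f j a := by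
      rw [sum_zmod_two]; simp [sgn, sub_eq_add_neg]
    simp_rw [h]
    rw [Finset.prod_univ_sum, Fintype.piFinset_univ]
  rw [h1, h2, Finset.sum_filter, Finset.mul_sum, ← Finset.sum_add_distrib, Finset.sum_div]
  refine Finset.sum_congr rfl fun a _ => ?_
  rw [← mul_boole, indicator_parity, sgn_sum, Finset.prod_mul_distrib]
  ring

/-- The enumerator of the strings in one block with X-parity `b` and a fixed Z-part `z` is
`h^b_{l,n}`, where `l` is the number of positions with nonzero Z-part. -/
lemma block_enum_aux {n : ℕ} (b : ZMod 2) (z : Fin n → ZMod 2) (l : ℕ)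
    (hl : (Finset.univ.filter fun j => z j ≠ 0).card = l) (x y : ℝ) :
    ∑ a : Fin n → ZMod 2 with ∑ j, a j = b, ∏ j, qw x y (a j) (z j) = hpol b l n x y := by
  rw [sum_parity (fun j a => qw x y a (z j)) b]
  have hp (j : Fin n) : qw x y 0 (z j) + qw x y 1 (z j) = if z j ≠ 0 then 2 * y else x + y := by
    by_cases h : z j = 0 <;> simp [qw, h, two_mul]
  have hs (j : Fin n) : qw x y 0 (z j) - qw x y 1 (z j) = if z j ≠ 0 then 0 else x - y := by
    by_cases h : z j = 0 <;> simp [qw, h]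
  have hc : (Finset.univ.filter fun j => ¬ z j ≠ 0).card = n - l := by
    have := Finset.card_filter_add_card_filter_not (s := (Finset.univ : Finset (Fin n)))
      (fun j => z j ≠ 0)
    rw [hl, Finset.card_univ, Fintype.card_fin] at this
    omega
  simp_rw [hp, hs]
  rw [Finset.prod_ite, Finset.prod_ite]
  simp only [Finset.prod_const, hl, hc]
  by_cases h0 : l = 0
  · subst h0
    by_cases hb : b = 0 <;> simp [hpol, fe, fo, sgn, hb, sub_eq_add_neg]
  · simp only [hpol, g, h0, if_false, zero_pow, ne_eq, not_false_eq_true]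
    ring

lemma card_lt {n k : ℕ} (hk : k ≤ n) :
    (Finset.univ.filter fun j : Fin n => (j : ℕ) < k).card = k := by
  rw [Fin.card_filter_val_lt]; omega

lemma block_enum {n : ℕ} (b ζ : ZMod 2) (k : ℕ) (hk : k ≤ n) (x y : ℝ) :
    ∑ a : Fin n → ZMod 2 with ∑ j, a j = b,
        ∏ j : Fin n, qw x y (a j) ((if (j : ℕ) < k then 1 else 0) + ζ)
      = if ζ = 0 then hpol b k n x y else hpol b (n - k) n x y := by
  split_ifs with h
  · subst h
    apply block_enum_aux
    simp [card_lt hk]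
  · apply block_enum_aux
    have hζ : ζ = 1 := (zmod_two_cases ζ).resolve_left h
    have h11 : (1 : ZMod 2) + 1 = 0 := by decide
    have he (j : Fin n) : ((if (j : ℕ) < k then 1 else 0) + ζ ≠ 0) ↔ ¬ ((j : ℕ) < k) := by
      by_cases hj : (j : ℕ) < k <;> simp [hj, hζ, h11]
    simp_rw [he]
    have := Finset.card_filter_add_card_filter_not (s := (Finset.univ : Finset (Fin n)))
      (fun j => (j : ℕ) < k)
    rw [card_lt hk, Finset.card_univ, Fintype.card_fin] at this
    omega

lemma monomial_eq_prod {m n : ℕ} (v : Fin m × Fin n → ZMod 2 × ZMod 2) (x y : ℝ) :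
    x ^ (m * n - wt2 v) * y ^ wt2 v = ∏ i, ∏ j, qw x y (v (i, j)).1 (v (i, j)).2 := by
  have hc := Finset.card_filter_add_card_filter_not
    (s := (Finset.univ : Finset (Fin m × Fin n))) (fun p => v p = (0, 0))
  rw [Finset.card_univ, Fintype.card_prod, Fintype.card_fin, Fintype.card_fin] at hc
  rw [← Fintype.prod_prod_type' (fun i j => qw x y (v (i, j)).1 (v (i, j)).2)]
  simp only [qw, Prod.mk.eta]
  rw [Finset.prod_ite, Finset.prod_const, Finset.prod_const, ← hc]
  simp [wt2]

/-- Membership in the coset: adding `Z̄` only changes the total parity of the Z-shifts to `1`. -/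
lemma mem_coset {m n : ℕ} (hm : 1 ≤ m) (hn : 1 ≤ n) (b : Fin m → ZMod 2) (k : Fin m → ℕ)
    (v : Fin m × Fin n → ZMod 2 × ZMod 2) :
    v ∈ (concatStab m n).image (fun s => (Mbk m n b k + ZbarC m n) + s) ↔
      (∀ i, ∑ j, (v (i, j)).1 = b i) ∧
      ∃ ζ : Fin m → ZMod 2,
        (∀ i j, (v (i, j)).2 = (if (j : ℕ) < k i then 1 else 0) + ζ i) ∧ ∑ i, ζ i = 1 := by
  have : NeZero m := ⟨by omega⟩
  have : NeZero n := ⟨by omega⟩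
  have hδ : ∑ i : Fin m, (if (i : ℕ) = 0 then (1 : ZMod 2) else 0) = 1 := by
    rw [Finset.sum_eq_single (0 : Fin m)] <;> simp
  simp only [Finset.mem_image, concatStab, Finset.mem_filter, Finset.mem_univ, true_and]
  constructor
  · rintro ⟨s, ⟨hs, ζ, hζ, hζ0⟩, rfl⟩
    refine ⟨fun i => ?_, fun i => (if (i : ℕ) = 0 then 1 else 0) + ζ i, fun i j => ?_, ?_⟩
    · simp [Mbk, ZbarC, Finset.sum_add_distrib, hs]
    · simp [Mbk, ZbarC, hζ, add_assoc]
    · rw [Finset.sum_add_distrib, hδ, hζ0, add_zero]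
  · rintro ⟨hv, ζ, hζ, hζ1⟩
    refine ⟨v - (Mbk m n b k + ZbarC m n),
      ⟨fun i => ?_, fun i => ζ i - (if (i : ℕ) = 0 then 1 else 0), fun i j => ?_, ?_⟩, by simp⟩
    · simp [Mbk, ZbarC, Finset.sum_sub_distrib, hv]
    · simp only [Mbk, ZbarC, Pi.sub_apply, Pi.add_apply, Prod.snd_sub, Prod.snd_add, hζ]
      ring
    · rw [Finset.sum_sub_distrib, hδ, hζ1, sub_self]

theorem weight_enumerator_concat_coset_Zbar (m n : ℕ) (hm : 1 ≤ m) (hn : 1 ≤ n)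
    (b : Fin m → ZMod 2) (k : Fin m → ℕ) (hk : ∀ i, k i ≤ n) (x y : ℝ) :
    enum2 ((concatStab m n).image fun s => (Mbk m n b k + ZbarC m n) + s) x y
      = Fo m (fun i => hpol (b i) (k i) n x y) (fun i => hpol (b i) (n - k i) n x y) := by
  have key : enum2 ((concatStab m n).image fun s => (Mbk m n b k + ZbarC m n) + s) x y
      = ∑ ζ : Fin m → ZMod 2 with ∑ i, ζ i = 1,
          ∑ a ∈ Fintype.piFinset fun i =>
              (Finset.univ.filter fun a : Fin n → ZMod 2 => ∑ j, a j = b i),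
            ∏ i, ∏ j : Fin n, qw x y (a i j) ((if (j : ℕ) < k i then 1 else 0) + ζ i) := by
    rw [← Finset.sum_product', enum2]
    -- The shift `ζ i` is read off at position `0` of block `i`.
    refine Finset.sum_nbij'
      (fun v => (fun i => (v (i, ⟨0, hn⟩)).2 - (if 0 < k i then 1 else 0),
        fun i j => (v (i, j)).1))
      (fun q p => (q.2 p.1 p.2, (if (p.2 : ℕ) < k p.1 then 1 else 0) + q.1 p.1))
      ?_ ?_ ?_ ?_ ?_
    · intro v hv
      obtain ⟨h1, ζ, h2, h3⟩ := (mem_coset hm hn b k v).1 hv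
      simp [h1, h2, h3]
    · intro q hq
      simp only [Finset.mem_product, Finset.mem_filter, Finset.mem_univ, true_and,
        Fintype.mem_piFinset] at hq
      exact (mem_coset hm hn b k _).2 ⟨hq.2, q.1, fun _ _ => rfl, hq.1⟩
    · intro v hv
      obtain ⟨h1, ζ, h2, h3⟩ := (mem_coset hm hn b k v).1 hv
      funext ⟨i, j⟩
      ext1 <;> simp [h2]
    · intro q _
      simp
    · intro v hv
      obtain ⟨h1, ζ, h2, h3⟩ := (mem_coset hm hn b k v).1 hv
      rw [monomial_eq_prod]
      simp [h2]
  rw [key]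
  have hfac (ζ : Fin m → ZMod 2) :
      ∑ a ∈ Fintype.piFinset fun i =>
          (Finset.univ.filter fun a : Fin n → ZMod 2 => ∑ j, a j = b i),
        ∏ i, ∏ j : Fin n, qw x y (a i j) ((if (j : ℕ) < k i then 1 else 0) + ζ i)
      = ∏ i, if ζ i = 0 then hpol (b i) (k i) n x y else hpol (b i) (n - k i) n x y := by
    rw [← Finset.prod_univ_sum (fun i =>
        Finset.univ.filter fun a : Fin n → ZMod 2 => ∑ j, a j = b i)
      (fun i a => ∏ j : Fin n, qw x y (a j) ((if (j : ℕ) < k i then 1 else 0) + ζ i))]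
    exact Finset.prod_congr rfl fun i _ => block_enum _ _ _ (hk i) x y
  rw [Finset.sum_congr rfl fun ζ _ => hfac ζ]
  rw [sum_parity (fun i z => if z = 0 then hpol (b i) (k i) n x y
    else hpol (b i) (n - k i) n x y) 1]
  simp [Fo, sgn, sub_eq_add_neg]
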